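/- arXiv:1112.4352 — 2 statements merged into one kernel-verified Lean document; each statement's English description precedes it below -/
import Mathlib

section
/- For all real x ≥ 0, the derivative of the function x ↦ √x · coth(√x) satisfies 0 ≤ (√x coth √x)' ≤ 1/3. -/
open Real

noncomputable def sqrtCoth (x : ℝ) : ℝ :=
  if x = 0 then 1 else Real.sqrt x * Real.cosh (Real.sqrt x) / Real.sinh (Real.sqrt x)

theorem aux_nonneg (f f' : ℝ → ℝ) (h : ∀ x, HasDerivAt f (f' x) x) (h0 : f 0 = 0)
    (hp : ∀ x, 0 ≤ x → 0 ≤ f' x) (x : ℝ) (hx : 0 ≤ x) : 0 ≤ f x := by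
  have hm : MonotoneOn f (Set.Ici 0) := by
    apply monotoneOn_of_deriv_nonneg (convex_Ici 0)
    · exact fun y _ => (h y).continuousAt.continuousWithinAt
    · exact fun y _ => (h y).differentiableAt.differentiableWithinAt
    · intro y hy
      rw [interior_Ici] at hy
      rw [(h y).deriv]
      exact hp y (le_of_lt hy)
  have := hm (Set.mem_Ici.2 le_rfl) (Set.mem_Ici.2 hx) hx
  rwa [h0] at this

theorem aux1 (s : ℝ) (hs : 0 ≤ s) : 0 ≤ s * Real.cosh s - Real.sinh s := by
  refine aux_nonneg (fun s => s * Real.cosh s - Real.sinh s) (fun s => s * Real.sinh s) ?_ (by simp) ?_ s hs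
  · intro x
    refine HasDerivAt.congr_deriv (((hasDerivAt_id x).mul (Real.hasDerivAt_cosh x)).sub (Real.hasDerivAt_sinh x)) ?_
    simp only [id]; ring
  · intro x hx
    exact mul_nonneg hx (Real.sinh_nonneg_iff.2 hx)

theorem aux2 (s : ℝ) (hs : 0 ≤ s) : 0 ≤ s * Real.sinh s + 2 - 2 * Real.cosh s := by
  refine aux_nonneg (fun s => s * Real.sinh s + 2 - 2 * Real.cosh s)
    (fun s => s * Real.cosh s - Real.sinh s) ?_ (by simp) aux1 s hs
  intro x
  refine HasDerivAt.congr_deriv ((((hasDerivAt_id x).mul (Real.hasDerivAt_sinh x)).add_const 2).sub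
    ((Real.hasDerivAt_cosh x).const_mul 2)) ?_
  simp only [id]; push_cast; ring

theorem aux3 (s : ℝ) (hs : 0 ≤ s) : 0 ≤ s * Real.cosh s + 2 * s - 3 * Real.sinh s := by
  refine aux_nonneg (fun s => s * Real.cosh s + 2 * s - 3 * Real.sinh s)
    (fun s => s * Real.sinh s + 2 - 2 * Real.cosh s) ?_ (by simp) aux2 s hs
  intro x
  refine HasDerivAt.congr_deriv ((((hasDerivAt_id x).mul (Real.hasDerivAt_cosh x)).add ((hasDerivAt_id x).const_mul 2)).sub
    ((Real.hasDerivAt_sinh x).const_mul 3)) ?_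
  simp only [id]; push_cast; ring

theorem aux4 (s : ℝ) (hs : 0 ≤ s) : 0 ≤ s ^ 2 * Real.sinh s + 3 * Real.sinh s - 3 * (s * Real.cosh s) := by
  refine aux_nonneg (fun s => s ^ 2 * Real.sinh s + 3 * Real.sinh s - 3 * (s * Real.cosh s))
    (fun s => s * (s * Real.cosh s - Real.sinh s)) ?_ (by simp)
    (fun x hx => mul_nonneg hx (aux1 x hx)) s hs
  intro x
  refine HasDerivAt.congr_deriv ((((hasDerivAt_pow 2 x).mul (Real.hasDerivAt_sinh x)).add
    ((Real.hasDerivAt_sinh x).const_mul 3)).sub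
    (((hasDerivAt_id x).mul (Real.hasDerivAt_cosh x)).const_mul 3)) ?_
  simp only [id]; push_cast; ring

theorem aux5 (s : ℝ) (hs : 0 ≤ s) : 0 ≤ s * Real.cosh s - Real.sinh s - s ^ 3 / 3 := by
  refine aux_nonneg (fun s => s * Real.cosh s - Real.sinh s - s ^ 3 / 3)
    (fun s => s * (Real.sinh s - s)) ?_ (by simp)
    (fun x hx => mul_nonneg hx (sub_nonneg.2 (Real.self_le_sinh_iff.2 hx))) s hs
  intro x
  refine HasDerivAt.congr_deriv ((((hasDerivAt_id x).mul (Real.hasDerivAt_cosh x)).sub (Real.hasDerivAt_sinh x)).sub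
    ((hasDerivAt_pow 3 x).div_const 3)) ?_
  simp only [id]; push_cast; ring

theorem aux_zero : HasDerivWithinAt sqrtCoth (1/3) (Set.Ici 0) 0 := by
  rw [hasDerivWithinAt_iff_tendsto_slope, Set.Ici_sdiff_left]
  have h1 : Filter.Tendsto (fun x : ℝ => Real.sqrt x) (nhdsWithin 0 (Set.Ioi 0))
      (nhdsWithin 0 {0}ᶜ) := by
    apply tendsto_nhdsWithin_of_tendsto_nhds_of_eventually_within
    · have := Real.continuous_sqrt.tendsto 0
      rw [Real.sqrt_zero] at this
      exact this.mono_left nhdsWithin_le_nhds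
    · filter_upwards [self_mem_nhdsWithin] with x hx
      exact (Real.sqrt_pos.2 hx).ne'
  have h2 : Filter.Tendsto (fun s : ℝ => Real.sinh s / s) (nhdsWithin 0 {0}ᶜ) (nhds 1) := by
    have := hasDerivAt_iff_tendsto_slope.1 (Real.hasDerivAt_sinh 0)
    rw [Real.cosh_zero] at this
    refine this.congr fun s => ?_
    simp [slope_def_field]
  have h3 := ((h2.comp h1).inv₀ one_ne_zero).mul_const (1/3)
  rw [inv_one, one_mul] at h3
  refine tendsto_of_tendsto_of_tendsto_of_le_of_le' h3 tendsto_const_nhds ?_ ?_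
  all_goals
    filter_upwards [self_mem_nhdsWithin] with x hx
    have hx : 0 < x := hx
    have hs : 0 < Real.sqrt x := Real.sqrt_pos.2 hx
    have hq : x = Real.sqrt x ^ 2 := (Real.sq_sqrt hx.le).symm
    have hsl : slope sqrtCoth 0 x = (√x * Real.cosh √x - Real.sinh √x) / (√x ^ 2 * Real.sinh √x) := by
      have hS : Real.sinh √x ≠ 0 := (Real.sinh_pos_iff.2 hs).ne'
      rw [slope_def_field, sqrtCoth, sqrtCoth, if_neg hx.ne', if_pos rfl, ← hq, sub_zero]
      field_simp
    rw [hsl]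
    try simp only [Function.comp]
    generalize √x = s at *
    have hS : 0 < Real.sinh s := Real.sinh_pos_iff.2 hs
  · have := aux5 s hs.le
    rw [le_div_iff₀ (by positivity)]
    have : (Real.sinh s / s)⁻¹ * (1/3) * (s ^ 2 * Real.sinh s) = s ^ 3 / 3 := by field_simp
    linarith
  · have := aux4 s hs.le
    rw [div_le_iff₀ (by positivity)]
    linarith

theorem deriv_sqrt_coth_sqrt_bounds :
    ∀ x : ℝ, 0 ≤ x →
      ∃ d : ℝ, HasDerivWithinAt sqrtCoth d (Set.Ici 0) x ∧ 0 ≤ d ∧ d ≤ 1/3 := by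
  intro x hx
  rcases hx.eq_or_lt with rfl | hx
  · exact ⟨1/3, aux_zero, by norm_num, le_rfl⟩
  have hs : 0 < √x := Real.sqrt_pos.2 hx
  have hS : 0 < Real.sinh √x := Real.sinh_pos_iff.2 hs
  refine ⟨(Real.sinh √x * Real.cosh √x - √x) / (2 * √x * Real.sinh √x ^ 2), ?_, ?_, ?_⟩
  · apply HasDerivAt.hasDerivWithinAt
    have hd := Real.hasDerivAt_sqrt hx.ne'
    have := (hd.mul hd.cosh).div hd.sinh hS.ne'
    have h2 := this.congr_of_eventuallyEq (f₁ := sqrtCoth) (by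
      filter_upwards [eventually_ne_nhds hx.ne'] with y hy
      simp [sqrtCoth, hy])
    convert h2 using 1
    simp only [Pi.mul_apply]
    generalize √x = s at *
    field_simp
    have := Real.cosh_sq s
    rw [this]
    ring
  · have h1 := Real.self_le_sinh_iff.2 hs.le
    have h2 := Real.one_le_cosh √x
    apply div_nonneg _ (by positivity)
    nlinarith
  · rw [div_le_iff₀ (by positivity)]
    have := aux3 (2 * √x) (by positivity)
    rw [Real.cosh_two_mul, Real.sinh_two_mul, Real.cosh_sq] at this
    nlinarith
end

section
/- Let l be a twice differentiable nondecreasing real function on (-∞, T) satisfying l''(t) + c e^{2t} l'(t) ≥ 0 with c > 0. Then for all t₂ < t₁ with t₁ + log 2 < T, (c/2)·4·e^{2t₁} < 1, and all 0 ≤ h ≤ log 2: l(t₂+h) - l(t₂) ≤ (1 + 4c·e^{2t₁})·(l(t₁+h) - l(t₁)). -/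
theorem integrated_doubling_estimate
    (T c : ℝ) (hc : 0 < c) (l l' l'' : ℝ → ℝ)
    (hl : ∀ t < T, HasDerivAt l (l' t) t)
    (hl' : ∀ t < T, HasDerivAt l' (l'' t) t)
    (hl'_nonneg : ∀ t < T, 0 ≤ l' t)
    (hineq : ∀ t < T, l'' t + c * Real.exp (2 * t) * l' t ≥ 0) :
    ∀ t₂ t₁ h : ℝ, t₂ < t₁ → t₁ + Real.log 2 < T →
      (c / 2) * 4 * Real.exp (2 * t₁) < 1 → 0 ≤ h → h ≤ Real.log 2 →
      l (t₂ + h) - l t₂ ≤ (1 + 4 * c * Real.exp (2 * t₁)) * (l (t₁ + h) - l t₁) := by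
  intro t₂ t₁ h h21 hT hx h0 hlog
  have hg : ∀ t < T, HasDerivAt (fun t => Real.exp ((c / 2) * Real.exp (2 * t)) * l' t)
      (Real.exp ((c / 2) * Real.exp (2 * t)) * (l'' t + c * Real.exp (2 * t) * l' t)) t := by
    intro t ht
    have h1 : HasDerivAt (fun t : ℝ => 2 * t) 2 t := by
      simpa using (hasDerivAt_id t).const_mul (2 : ℝ)
    have h2 := ((h1.exp.const_mul (c / 2)).exp).mul (hl' t ht)
    refine h2.congr_deriv ?_
    ring
  have hmono : MonotoneOn (fun t => Real.exp ((c / 2) * Real.exp (2 * t)) * l' t) (Set.Iio T) := by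
    refine monotoneOn_of_hasDerivWithinAt_nonneg (convex_Iio T)
      (fun t ht => (hg t ht).continuousAt.continuousWithinAt)
      (fun t ht => (hg t (Set.mem_Iio.1 (interior_subset ht))).hasDerivWithinAt) ?_
    intro t ht
    exact mul_nonneg (Real.exp_pos _).le (hineq t (Set.mem_Iio.1 (interior_subset ht)))
  have key : ∀ s, 0 ≤ s → s ≤ Real.log 2 →
      l' (t₂ + s) ≤ (1 + 4 * c * Real.exp (2 * t₁)) * l' (t₁ + s) := by
    intro s hs0 hs
    have a1 : t₁ + s < T := by linarith
    have a2 : t₂ + s < T := by linarith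
    have m := hmono (Set.mem_Iio.2 a2) (Set.mem_Iio.2 a1) (by linarith)
    simp only at m
    have p1 := hl'_nonneg _ a1
    have p2 := hl'_nonneg _ a2
    have e1 : 1 ≤ Real.exp ((c / 2) * Real.exp (2 * (t₂ + s))) :=
      Real.one_le_exp (by positivity)
    have e2 : Real.exp (2 * (t₁ + s)) ≤ 4 * Real.exp (2 * t₁) := by
      have : Real.exp (2 * Real.log 2) = 4 := by
        rw [two_mul, Real.exp_add, Real.exp_log (by norm_num)]; norm_num
      rw [← this, ← Real.exp_add]
      exact Real.exp_le_exp.2 (by linarith)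
    have e3 : Real.exp ((c / 2) * Real.exp (2 * (t₁ + s))) ≤
        Real.exp ((c / 2) * 4 * Real.exp (2 * t₁)) := by
      apply Real.exp_le_exp.2
      rw [mul_assoc]
      exact mul_le_mul_of_nonneg_left e2 (by positivity)
    have xp : 0 ≤ (c / 2) * 4 * Real.exp (2 * t₁) := by positivity
    have e4 := Real.abs_exp_sub_one_le (x := (c / 2) * 4 * Real.exp (2 * t₁))
      (by rw [abs_of_nonneg xp]; exact hx.le)
    rw [abs_of_nonneg xp] at e4
    have e5 := (abs_le.1 e4).2
    calc l' (t₂ + s) ≤ Real.exp ((c / 2) * Real.exp (2 * (t₂ + s))) * l' (t₂ + s) :=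
          le_mul_of_one_le_left p2 e1
      _ ≤ _ := m
      _ ≤ _ := mul_le_mul_of_nonneg_right (by linarith) p1
  have hF : ∀ s, 0 ≤ s → s ≤ Real.log 2 →
      HasDerivAt (fun s => (1 + 4 * c * Real.exp (2 * t₁)) * l (t₁ + s) - l (t₂ + s))
        ((1 + 4 * c * Real.exp (2 * t₁)) * l' (t₁ + s) - l' (t₂ + s)) s := by
    intro s hs0 hs
    exact (((hl (t₁ + s) (by linarith)).comp_const_add t₁ s).const_mul _).sub
      ((hl (t₂ + s) (by linarith)).comp_const_add t₂ s)
  have hFm : MonotoneOn (fun s => (1 + 4 * c * Real.exp (2 * t₁)) * l (t₁ + s) - l (t₂ + s))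
      (Set.Icc 0 (Real.log 2)) := by
    refine monotoneOn_of_hasDerivWithinAt_nonneg (convex_Icc _ _)
      (fun t ht => (hF t ht.1 ht.2).continuousAt.continuousWithinAt)
      (fun t ht => (hF t (interior_subset ht).1 (interior_subset ht).2).hasDerivWithinAt) ?_
    intro t ht
    exact sub_nonneg.2 (key t (interior_subset ht).1 (interior_subset ht).2)
  have r := hFm (Set.mem_Icc.2 ⟨le_refl _, h0.trans hlog⟩) (Set.mem_Icc.2 ⟨h0, hlog⟩) h0
  simp only [add_zero] at r
  linarith
end
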